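/- Let n be a positive integer, let ℍ be the hyperbolic plane, let C ≥ 1 be a real number, let X' be a subset of the Euclidean space ℝⁿ, and let f : X' → ℍ be a C-Lipschitz map. Then there exists a C-Lipschitz map F : ℝⁿ → ℍ with F(x) = f(x) for all x ∈ X'. -/

import Mathlib

open scoped UpperHalfPlane

lemma aux_sinh_convex : ConvexOn ℝ (Set.Ici 0) Real.sinh := by
  apply MonotoneOn.convexOn_of_deriv (convex_Ici 0) Real.continuous_sinh.continuousOn
    Real.differentiable_sinh.differentiableOn
  intro x hx y hy hxy
  simp only [interior_Ici, Set.mem_Ioi] at hx hy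
  rw [Real.deriv_sinh]
  exact Real.cosh_le_cosh.2 (by rw [abs_of_pos hx, abs_of_pos hy]; exact hxy)

lemma aux_sinh_mul {x m : ℝ} (hx : 0 ≤ x) (hxm : x ≤ m) :
    Real.sinh x * m ≤ Real.sinh m * x := by
  rcases eq_or_lt_of_le (hx.trans hxm) with h | h
  · have : x = 0 := by linarith
    subst this; simp [← h]
  have := aux_sinh_convex.2 (show (0 : ℝ) ∈ Set.Ici 0 by simp) (show m ∈ Set.Ici 0 from h.le)
    (show 0 ≤ 1 - x / m by rw [sub_nonneg, div_le_one h]; exact hxm)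
    (show 0 ≤ x / m by positivity) (by ring)
  simp only [smul_eq_mul, mul_zero, zero_add, Real.sinh_zero] at this
  rw [div_mul_cancel₀ _ h.ne'] at this
  calc _ ≤ (x / m * Real.sinh m) * m := by gcongr
    _ = _ := by field_simp

lemma aux_inc {m x : ℝ} (hm : 0 < m) (hx : m ≤ x) :
    Real.sinh m / (2 * m) * (x ^ 2 - m ^ 2) ≤ Real.cosh x - Real.cosh m := by
  have hmono : MonotoneOn (fun x => Real.cosh x - Real.sinh m / (2 * m) * x ^ 2) (Set.Ici m) := by
    apply monotoneOn_of_hasDerivWithinAt_nonneg (convex_Ici m) (by fun_prop)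
      (f' := fun x => Real.sinh x - Real.sinh m / (2 * m) * (2 * x))
    · intro y hy
      apply HasDerivAt.hasDerivWithinAt
      have := (Real.hasDerivAt_cosh y).sub
        ((hasDerivAt_pow 2 y).const_mul (Real.sinh m / (2 * m)))
      simp only [Nat.cast_ofNat, Nat.add_one_sub_one, pow_one] at this
      exact this
    · intro y hy
      simp only [interior_Ici, Set.mem_Ioi] at hy
      have := aux_sinh_mul hm.le hy.le
      have h2 : Real.sinh m / (2 * m) * (2 * y) = Real.sinh m * y / m := by field_simp
      rw [h2, sub_nonneg, div_le_iff₀ hm]; exact this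
  have := hmono (Set.self_mem_Ici) hx hx
  simp only at this
  linarith

lemma aux_dec {m x y : ℝ} (hm : 0 < m) (hx : 0 ≤ x) (hxy : x ≤ y) (hy : y ≤ m) :
    Real.cosh y - Real.cosh x ≤ Real.sinh m / (2 * m) * (y ^ 2 - x ^ 2) := by
  have hmono : AntitoneOn (fun x => Real.cosh x - Real.sinh m / (2 * m) * x ^ 2)
      (Set.Icc 0 m) := by
    apply antitoneOn_of_hasDerivWithinAt_nonpos (convex_Icc 0 m) (by fun_prop)
      (f' := fun x => Real.sinh x - Real.sinh m / (2 * m) * (2 * x))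
    · intro y hy
      apply HasDerivAt.hasDerivWithinAt
      have := (Real.hasDerivAt_cosh y).sub
        ((hasDerivAt_pow 2 y).const_mul (Real.sinh m / (2 * m)))
      simp only [Nat.cast_ofNat, Nat.add_one_sub_one, pow_one] at this
      exact this
    · intro y hy
      simp only [interior_Icc, Set.mem_Ioo] at hy
      have := aux_sinh_mul hy.1.le hy.2.le
      have h2 : Real.sinh m / (2 * m) * (2 * y) = Real.sinh m * y / m := by field_simp
      rw [h2, sub_nonpos, le_div_iff₀ hm]; exact this
  have := hmono (a := x) ⟨hx, hxy.trans hy⟩ (b := y) ⟨hx.trans hxy, hy⟩ hxy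
  simp only at this
  linarith

lemma aux_major' {P Q a b : ℝ} (hQ : 0 ≤ Q) (hQa : Q ≤ a) (hab : a ≤ b) (hbP : b ≤ P)
    (h : Real.cosh a + Real.cosh b = Real.cosh P + Real.cosh Q) :
    P ^ 2 + Q ^ 2 ≤ a ^ 2 + b ^ 2 := by
  rcases eq_or_lt_of_le (hQ.trans (hQa.trans hab)) with hb | hb
  · have ha : a = 0 := by linarith
    have hq : Q = 0 := by linarith
    subst ha; subst hb; subst hq
    have : Real.cosh P = 1 := by simp at h; linarith
    have : P = 0 := by
      by_contra hP
      have := Real.one_lt_cosh.2 hP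
      linarith
    simp [this]
  have h1 := aux_inc hb hbP
  have h2 := aux_dec hb hQ hQa hab
  have hK : 0 < Real.sinh b / (2 * b) := by
    have := Real.sinh_pos_iff.2 hb
    positivity
  by_contra! hc
  nlinarith

lemma aux_major {P Q a b : ℝ} (hQ : 0 ≤ Q) (hQa : Q ≤ a) (hQb : Q ≤ b) (haP : a ≤ P) (hbP : b ≤ P)
    (h : Real.cosh a + Real.cosh b = Real.cosh P + Real.cosh Q) :
    P ^ 2 + Q ^ 2 ≤ a ^ 2 + b ^ 2 := by
  rcases le_total a b with hab | hab
  · exact aux_major' hQ hQa hab hbP h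
  · have := aux_major' hQ hQb hab haP (by linarith)
    linarith

lemma aux_mid (z w : ℍ) : ∃ m : ℍ, ∀ p : ℍ,
    Real.cosh (dist p z) + Real.cosh (dist p w) =
      2 * Real.cosh (dist z w / 2) * Real.cosh (dist p m) := by
  have hz := z.im_pos
  have hw := w.im_pos
  have hk : 0 < Real.cosh (dist z w / 2) := Real.cosh_pos _
  have hk2 : 2 * Real.cosh (dist z w / 2) ^ 2 = 1 + Real.cosh (dist z w) := by
    have := Real.cosh_two_mul (dist z w / 2)
    rw [Real.sinh_sq] at this
    rw [show 2 * (dist z w / 2) = dist z w by ring] at this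
    linarith
  rw [UpperHalfPlane.cosh_dist'] at hk2
  set k := Real.cosh (dist z w / 2) with hkdef
  refine ⟨⟨⟨(z.re * w.im + w.re * z.im) / (z.im + w.im), 2 * k * z.im * w.im / (z.im + w.im)⟩,
    by simp only; positivity⟩, fun p => ?_⟩
  have hp := p.im_pos
  simp only [UpperHalfPlane.cosh_dist']
  simp only [UpperHalfPlane.re, UpperHalfPlane.im] at *
  generalize (z : ℂ).re = x0 at *
  generalize (z : ℂ).im = y0 at *
  generalize (w : ℂ).re = x1 at *
  generalize (w : ℂ).im = y1 at *
  generalize (p : ℂ).re = x at *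
  generalize (p : ℂ).im = y at *
  clear_value k
  have hs : 0 < y0 + y1 := by positivity
  field_simp at hk2 ⊢
  have e : 4 * k ^ 2 * y0 * y1 = 2 * y0 * y1 + ((x0 - x1) ^ 2 + y0 ^ 2 + y1 ^ 2) := by
    linarith
  linear_combination (-(y0 * y1)) * e

lemma aux_CN (z w : ℍ) : ∃ m : ℍ, ∀ p : ℍ,
    dist m p ^ 2 ≤ dist z p ^ 2 / 2 + dist w p ^ 2 / 2 - dist z w ^ 2 / 4 := by
  obtain ⟨m, hm⟩ := aux_mid z w
  have hc0 : 0 ≤ dist z w / 2 := by positivity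
  have key : ∀ q : ℍ, Real.cosh (dist q z) + Real.cosh (dist q w) = 1 + Real.cosh (dist z w) →
      dist q m = dist z w / 2 := by
    intro q hq
    have h1 := hm q
    have := Real.cosh_two_mul (dist z w / 2)
    rw [Real.sinh_sq, show 2 * (dist z w / 2) = dist z w by ring] at this
    have hk : 0 < Real.cosh (dist z w / 2) := Real.cosh_pos _
    have : Real.cosh (dist q m) = Real.cosh (dist z w / 2) := by
      have : 2 * Real.cosh (dist z w / 2) * (Real.cosh (dist q m) - Real.cosh (dist z w / 2)) = 0 := by
        nlinarith
      rcases mul_eq_zero.1 this with h | h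
      · linarith
      · linarith
    exact Real.cosh_strictMonoOn.injOn (by simp) (by simpa using hc0) this
  have hzm := key z (by simp)
  have hwm := key w (by simp [dist_comm w z]; ring)
  refine ⟨m, fun p => ?_⟩
  have h := hm p
  rw [dist_comm m p, dist_comm z p, dist_comm w p]
  have e1 := Real.cosh_add (dist z w / 2) (dist p m)
  have e2 := Real.cosh_sub (dist z w / 2) (dist p m)
  have t1 := dist_triangle p m z
  have t2 := dist_triangle p m w
  have t3 := dist_triangle m p z
  have t4 := dist_triangle m p w
  have t5 := dist_triangle p z m
  have t6 := dist_triangle p w m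
  rw [dist_comm m z, hzm] at t1 t3
  rw [dist_comm m w, hwm] at t2 t4
  rw [dist_comm m p] at t3 t4
  rw [hzm] at t5
  rw [hwm] at t6
  have := aux_major (P := dist z w / 2 + dist p m) (Q := |dist z w / 2 - dist p m|)
    (a := dist p z) (b := dist p w) (abs_nonneg _)
    (abs_le.2 ⟨by linarith, by linarith⟩) (abs_le.2 ⟨by linarith, by linarith⟩)
    (by linarith) (by linarith) (by rw [Real.cosh_abs]; linarith)
  rw [sq_abs] at this
  nlinarith

lemma aux_geo (z w : ℍ) (n : ℕ) : ∃ m : ℍ, ∀ p : ℍ,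
    dist m p ^ 2 ≤ (1 - (1 / 2) ^ n) * dist z p ^ 2 + (1 / 2) ^ n * dist w p ^ 2
      - (1 / 2) ^ n * (1 - (1 / 2) ^ n) * dist z w ^ 2 := by
  induction n with
  | zero => exact ⟨w, fun p => by simp⟩
  | succ n ih =>
    obtain ⟨y, hy⟩ := ih
    obtain ⟨m, hm⟩ := aux_CN z y
    refine ⟨m, fun p => ?_⟩
    have h1 := hm p
    have h2 := hy p
    have h3 := hy w
    rw [pow_succ ((1 : ℝ) / 2) n]
    have he0 : (0 : ℝ) ≤ (1 / 2) ^ n := by positivity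
    have he1 : ((1 : ℝ) / 2) ^ n ≤ 1 := pow_le_one₀ (by norm_num) (by norm_num)
    generalize ((1 : ℝ) / 2) ^ n = e at *
    have h4 : dist y w ≤ (1 - e) * dist z w := by
      apply le_of_sq_le_sq _ (mul_nonneg (by linarith) dist_nonneg)
      rw [dist_self] at h3
      nlinarith
    have h5 : e * dist z w ≤ dist z y := by
      have := dist_triangle z y w
      linarith
    have h6 : (e * dist z w) ^ 2 ≤ dist z y ^ 2 := by
      have : 0 ≤ e * dist z w := mul_nonneg he0 dist_nonneg
      gcongr
    nlinarith

lemma aux_pos (a b : ℝ) : max (a + b) 0 ^ 2 ≤ max a 0 ^ 2 + 2 * max a 0 * b + b ^ 2 := by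
  rcases le_total a 0 with h | h <;> rcases le_total (a + b) 0 with h' | h' <;>
    simp only [max_eq_left, max_eq_right, h, h'] <;> nlinarith [sq_nonneg (a+b)]

open Filter Topology in
/-- first order condition -/
lemma aux_first {ι : Type*} [Fintype ι] (Y : ι → ℍ) (r : ι → ℝ) (y0 z : ℍ)
    (hmin : ∀ y : ℍ, ∑ i, max (dist y0 (Y i) ^ 2 - r i) 0 ^ 2 ≤
      ∑ i, max (dist y (Y i) ^ 2 - r i) 0 ^ 2) :
    0 ≤ ∑ i, max (dist y0 (Y i) ^ 2 - r i) 0 *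
      (dist z (Y i) ^ 2 - dist y0 (Y i) ^ 2 - dist y0 z ^ 2) := by
  set c : ι → ℝ := fun i => max (dist y0 (Y i) ^ 2 - r i) 0 with hc
  let h : ℝ → ι → ℝ := fun e i =>
    dist z (Y i) ^ 2 - dist y0 (Y i) ^ 2 - (1 - e) * dist y0 z ^ 2
  have key : ∀ n : ℕ, 0 ≤ ∑ i, (2 * c i * h ((1 / 2) ^ n) i + (1 / 2) ^ n * h ((1 / 2) ^ n) i ^ 2) := by
    intro n
    obtain ⟨m, hm⟩ := aux_geo y0 z n
    have he0 : (0 : ℝ) < (1 / 2) ^ n := by positivity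
    generalize ((1 : ℝ) / 2) ^ n = e at *
    have h1 : ∑ i, c i ^ 2 ≤ ∑ i, (c i ^ 2 + 2 * c i * (e * h e i) + (e * h e i) ^ 2) := by
      refine (hmin m).trans (Finset.sum_le_sum fun i _ => ?_)
      refine le_trans ?_ (aux_pos _ _)
      have := hm (Y i)
      gcongr
      simp only [h]
      linarith
    have h2 : ∑ i, (c i ^ 2 + 2 * c i * (e * h e i) + (e * h e i) ^ 2) =
        ∑ i, c i ^ 2 + e * ∑ i, (2 * c i * h e i + e * h e i ^ 2) := by
      rw [Finset.mul_sum, ← Finset.sum_add_distrib]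
      exact Finset.sum_congr rfl fun i _ => by ring
    rw [h2] at h1
    have h3 : 0 ≤ e * ∑ i, (2 * c i * h e i + e * h e i ^ 2) := by linarith
    exact nonneg_of_mul_nonneg_right h3 he0
  have hcont : Continuous fun e : ℝ => ∑ i, (2 * c i * h e i + e * h e i ^ 2) := by
    simp only [h]; fun_prop
  have ht : Tendsto (fun n : ℕ => ((1 : ℝ) / 2) ^ n) atTop (𝓝 0) :=
    tendsto_pow_atTop_nhds_zero_of_lt_one (by norm_num) (by norm_num)
  have := ge_of_tendsto' ((hcont.tendsto 0).comp ht) key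
  have h2 : ∑ i, (2 * c i * h 0 i + 0 * h 0 i ^ 2) = 2 * ∑ i, c i * h 0 i := by
    rw [Finset.mul_sum]
    exact Finset.sum_congr rfl fun i _ => by ring
  rw [h2] at this
  have h3 : 0 ≤ ∑ i, c i * h 0 i := by linarith
  simpa [h] using h3

lemma aux_finite {E : Type*} [NormedAddCommGroup E] [InnerProductSpace ℝ E] {ι : Type*} [Fintype ι]
    (C : ℝ) (hC : 0 ≤ C) (X : ι → E) (Y : ι → ℍ)
    (hXY : ∀ i j, dist (Y i) (Y j) ≤ C * dist (X i) (X j)) (x : E) :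
    ∃ y : ℍ, ∀ i, dist y (Y i) ≤ C * dist x (X i) := by
  rcases isEmpty_or_nonempty ι with hι | ⟨⟨i0⟩⟩
  · exact ⟨UpperHalfPlane.I, fun i => (hι.false i).elim⟩
  set r : ι → ℝ := fun i => (C * dist x (X i)) ^ 2 with hr
  set ψ : ℍ → ℝ := fun y => ∑ i, max (dist y (Y i) ^ 2 - r i) 0 ^ 2 with hψ
  have hψc : Continuous ψ := by simp only [hψ]; fun_prop
  obtain ⟨y0, hy0⟩ : ∃ y0, ∀ y, ψ y0 ≤ ψ y := by
    apply hψc.exists_forall_le_of_isBounded (Y i0)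
    set B := ψ (Y i0)
    rw [Metric.isBounded_iff_subset_closedBall (Y i0)]
    refine ⟨1 + B + r i0 + 1, fun y hy => ?_⟩
    simp only [Set.mem_ofPred_eq] at hy
    have h1 : max (dist y (Y i0) ^ 2 - r i0) 0 ^ 2 ≤ B :=
      (Finset.single_le_sum (f := fun i => max (dist y (Y i) ^ 2 - r i) 0 ^ 2)
        (fun i _ => sq_nonneg _) (Finset.mem_univ i0)).trans hy
    rw [Metric.mem_closedBall]
    have h2 := le_max_left (dist y (Y i0) ^ 2 - r i0) 0
    generalize max (dist y (Y i0) ^ 2 - r i0) 0 = M at *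
    nlinarith [sq_nonneg (M - 1), sq_nonneg (dist y (Y i0) - 1), sq_nonneg M]
  set c : ι → ℝ := fun i => max (dist y0 (Y i) ^ 2 - r i) 0 with hc
  have hc0 : ∀ i, 0 ≤ c i := fun i => le_max_right _ _
  have hcd : ∀ i, c i * dist y0 (Y i) ^ 2 = c i * (r i + c i) := by
    intro i
    simp only [hc]
    rcases le_total (dist y0 (Y i) ^ 2 - r i) 0 with h | h
    · rw [max_eq_right h]; ring
    · rw [max_eq_left h]; ring
  have hf : 0 ≤ ∑ j, ∑ i, c j * (c i * (dist (Y j) (Y i) ^ 2 - dist y0 (Y i) ^ 2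
      - dist y0 (Y j) ^ 2)) := by
    refine Finset.sum_nonneg fun j _ => ?_
    rw [← Finset.mul_sum]
    exact mul_nonneg (hc0 j) (aux_first Y r y0 (Y j) hy0)
  have hle : ∑ j, ∑ i, c j * (c i * (dist (Y j) (Y i) ^ 2 - dist y0 (Y i) ^ 2
      - dist y0 (Y j) ^ 2)) ≤
      ∑ j, ∑ i, (- 2 * C ^ 2 * inner ℝ (c j • (X j - x)) (c i • (X i - x))
        - c j * c i * (c i + c j)) := by
    refine Finset.sum_le_sum fun j _ => Finset.sum_le_sum fun i _ => ?_
    have hd : dist (Y j) (Y i) ^ 2 ≤ C ^ 2 * dist (X j) (X i) ^ 2 := by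
      rw [← mul_pow]
      have := hXY j i
      gcongr
    have hin : dist (X j) (X i) ^ 2 = dist x (X j) ^ 2 - 2 * inner ℝ (X j - x) (X i - x)
        + dist x (X i) ^ 2 := by
      rw [dist_comm x, dist_comm x, dist_eq_norm, dist_eq_norm, dist_eq_norm,
        ← norm_sub_sq_real]
      congr 2; abel
    rw [inner_smul_left, inner_smul_right]
    simp only [conj_trivial]
    have hi := hcd i
    have hj := hcd j
    have hri : r i = C ^ 2 * dist x (X i) ^ 2 := by simp only [hr]; ring
    have hrj : r j = C ^ 2 * dist x (X j) ^ 2 := by simp only [hr]; ring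
    rw [hin] at hd
    rw [hri] at hi
    rw [hrj] at hj
    have hcc := mul_nonneg (hc0 j) (hc0 i)
    have := mul_le_mul_of_nonneg_left hd hcc
    linear_combination this - c j * hi - c i * hj
  have hs : ∑ j, ∑ i, (- 2 * C ^ 2 * inner ℝ (c j • (X j - x)) (c i • (X i - x))
        - c j * c i * (c i + c j)) = - 2 * C ^ 2 * ‖∑ i, c i • (X i - x)‖ ^ 2
        - ∑ j, ∑ i, c j * c i * (c i + c j) := by
    simp only [Finset.sum_sub_distrib, ← Finset.mul_sum]
    rw [← real_inner_self_eq_norm_sq, sum_inner]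
    simp only [inner_sum]
  have hz : ∑ j, ∑ i, c j * c i * (c i + c j) ≤ 0 := by
    have : 0 ≤ 2 * C ^ 2 * ‖∑ i, c i • (X i - x)‖ ^ 2 := by positivity
    linarith
  refine ⟨y0, fun k => ?_⟩
  have h1 : c k * c k * (c k + c k) ≤ 0 := by
    refine le_trans ?_ hz
    have hnn : ∀ j i, 0 ≤ c j * c i * (c i + c j) := fun j i =>
      mul_nonneg (mul_nonneg (hc0 j) (hc0 i)) (add_nonneg (hc0 i) (hc0 j))
    refine le_trans ?_ (Finset.single_le_sum (f := fun j => ∑ i, c j * c i * (c i + c j))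
      (fun j _ => Finset.sum_nonneg fun i _ => hnn j i) (Finset.mem_univ k))
    exact Finset.single_le_sum (f := fun i => c k * c i * (c i + c k))
      (fun i _ => hnn k i) (Finset.mem_univ k)
  have h2 : c k ≤ 0 := by
    by_contra! hpos
    have : 0 < c k * c k * (c k + c k) := by positivity
    linarith
  have h3 : dist y0 (Y k) ^ 2 ≤ (C * dist x (X k)) ^ 2 := by
    have := le_max_left (dist y0 (Y k) ^ 2 - r k) 0
    simp only [hc] at h2
    simp only [hr] at *
    linarith
  exact le_of_sq_le_sq h3 (by positivity)

lemma aux_point {E : Type*} [NormedAddCommGroup E] [InnerProductSpace ℝ E] {ι : Type*}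
    (C : ℝ) (hC : 0 ≤ C) (X : ι → E) (Y : ι → ℍ)
    (hXY : ∀ i j, dist (Y i) (Y j) ≤ C * dist (X i) (X j)) (x : E) :
    ∃ y : ℍ, ∀ i, dist y (Y i) ≤ C * dist x (X i) := by
  classical
  rcases isEmpty_or_nonempty ι with hι | ⟨⟨i0⟩⟩
  · exact ⟨UpperHalfPlane.I, fun i => (hι.false i).elim⟩
  obtain ⟨y, -, hy⟩ := (isCompact_closedBall (Y i0) (C * dist x (X i0))).inter_iInter_nonempty
    (fun i => Metric.closedBall (Y i) (C * dist x (X i))) (fun i => Metric.isClosed_closedBall)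
    (by
      intro u
      obtain ⟨y, hy⟩ := aux_finite C hC (fun i : (insert i0 u : Finset ι) => X i)
        (fun i => Y i) (fun i j => hXY i j) x
      refine ⟨y, hy ⟨i0, by simp⟩, ?_⟩
      simp only [Set.mem_iInter]
      exact fun i hi => hy ⟨i, by simp [hi]⟩)
  simp only [Set.mem_iInter] at hy
  exact ⟨y, hy⟩

theorem stmt_11 (n : ℕ) (hn : 0 < n) (C : ℝ) (hC : 1 ≤ C)
    (X' : Set (EuclideanSpace ℝ (Fin n))) (f : X' → ℍ)
    (hf : ∀ x y : X',
      dist (f x) (f y) ≤ C * dist (x : EuclideanSpace ℝ (Fin n)) (y : EuclideanSpace ℝ (Fin n))) :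
    ∃ F : EuclideanSpace ℝ (Fin n) → ℍ,
      (∀ x y : EuclideanSpace ℝ (Fin n), dist (F x) (F y) ≤ C * dist x y) ∧
      ∀ x : X', F x = f x := by
  have hC0 : 0 ≤ C := by linarith
  obtain ⟨G, hfG, hG⟩ := zorn_subset_nonempty
    {G : Set (EuclideanSpace ℝ (Fin n) × ℍ) | ∀ p ∈ G, ∀ q ∈ G,
      dist p.2 q.2 ≤ C * dist p.1 q.1}
    (by
      intro c hc hchain hne
      refine ⟨⋃₀ c, ?_, fun s hs => Set.subset_sUnion_of_mem hs⟩
      rintro p ⟨s, hs, hps⟩ q ⟨t, ht, hqt⟩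
      rcases hchain.total hs ht with h | h
      · exact hc ht p (h hps) q hqt
      · exact hc hs p hps q (h hqt))
    (Set.range fun x : X' => ((x : EuclideanSpace ℝ (Fin n)), f x))
    (by
      rintro _ ⟨x, rfl⟩ _ ⟨y, rfl⟩
      exact hf x y)
  have hG1 : ∀ p ∈ G, ∀ q ∈ G, dist p.2 q.2 ≤ C * dist p.1 q.1 := hG.prop
  have hall : ∀ x, ∃ y, (x, y) ∈ G := by
    intro x
    obtain ⟨y, hy⟩ := aux_point C hC0 (fun p : G => p.1.1) (fun p : G => p.1.2)
      (fun p q => hG1 p p.2 q q.2) x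
    refine ⟨y, hG.le_of_ge (y := insert (x, y) G) ?_ (Set.subset_insert _ _)
      (Set.mem_insert _ _)⟩
    rintro p (rfl | hp) q (rfl | hq)
    · simp
    · exact hy ⟨q, hq⟩
    · rw [dist_comm, dist_comm p.1]; exact hy ⟨p, hp⟩
    · exact hG1 p hp q hq
  choose F hF using hall
  refine ⟨F, fun x y => hG1 _ (hF x) _ (hF y), fun x => ?_⟩
  have := hG1 _ (hF x) _ (hfG ⟨x, rfl⟩)
  simpa using this
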